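/- Every connected graph G has an optimal tree decomposition (T, {B_x}) such that for every oriented edge xy of T, the induced subgraph G_{x|y} of G on the union of the bags of the component of T - xy containing x is connected. -/

import Mathlib

open SimpleGraph

/-- A tree decomposition of a graph `G`. -/
structure TreeDecomp {V : Type} (G : SimpleGraph V) where
  ι : Type
  tree : SimpleGraph ι
  isTree : tree.IsTree
  bag : ι → Finset V
  covers : ∀ v : V, ∃ x, v ∈ bag x
  coversEdge : ∀ ⦃u v : V⦄, G.Adj u v → ∃ x, u ∈ bag x ∧ v ∈ bag x
  bagConn : ∀ v : V, (tree.induce {x | v ∈ bag x}).Connected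

/-- `G` has a tree decomposition of width at most `k` (bags of size at most `k+1`). -/
def TwLE {V : Type} (G : SimpleGraph V) (k : ℕ) : Prop :=
  ∃ D : TreeDecomp G, ∀ x, (D.bag x).card ≤ k + 1

/-- A path decomposition of a graph `G`: a sequence of bags. -/
structure PathDecomp {V : Type} (G : SimpleGraph V) where
  n : ℕ
  bag : Fin n → Finset V
  covers : ∀ v : V, ∃ i, v ∈ bag i
  coversEdge : ∀ ⦃u v : V⦄, G.Adj u v → ∃ i, u ∈ bag i ∧ v ∈ bag i
  consecutive : ∀ (v : V) (i j k : Fin n), i ≤ j → j ≤ k → v ∈ bag i → v ∈ bag k → v ∈ bag j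

/-- `G` has a path decomposition of width at most `k` (bags of size at most `k+1`). -/
def PwLE {V : Type} (G : SimpleGraph V) (k : ℕ) : Prop :=
  ∃ P : PathDecomp G, ∀ i, (P.bag i).card ≤ k + 1

/-- A copy of a subdivision of the tree `T` inside the graph `G`:
branch vertices `φ x`, and for each edge of `T` a path of `G` between the
corresponding branch vertices, internally disjoint from all branch vertices
and from the paths of all other edges. -/
structure SubdivCopy {α V : Type} (T : SimpleGraph α) (G : SimpleGraph V) where
  φ : α → V
  inj : Function.Injective φ
  path : ∀ ⦃x y : α⦄, T.Adj x y → G.Walk (φ x) (φ y)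
  isPath : ∀ ⦃x y : α⦄ (h : T.Adj x y), (path h).IsPath
  branch : ∀ ⦃x y : α⦄ (h : T.Adj x y) (z : α), φ z ∈ (path h).support → z = x ∨ z = y
  disj : ∀ ⦃x y x' y' : α⦄ (h : T.Adj x y) (h' : T.Adj x' y'),
    ({x, y} : Set α) ≠ {x', y'} →
    ∀ v, v ∈ (path h).support → v ∈ (path h').support →
      v ∈ φ '' (({x, y} : Set α) ∩ {x', y'})

/-- The set of vertices used by a subdivision copy. -/
def SubdivCopy.supp {α V : Type} {T : SimpleGraph α} {G : SimpleGraph V}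
    (c : SubdivCopy T G) : Set V :=
  Set.range c.φ ∪ {v | ∃ x y, ∃ h : T.Adj x y, v ∈ (c.path h).support}

/-- `G` contains a subdivision of `T` as a subgraph. -/
def ContainsSubdiv {α V : Type} (T : SimpleGraph α) (G : SimpleGraph V) : Prop :=
  Nonempty (SubdivCopy T G)

/-- `S` is (isomorphic to) a subdivision of `T`: a subdivision copy of `T`
using all vertices and all edges of `S`. -/
def IsSubdivisionOf {α W : Type} (T : SimpleGraph α) (S : SimpleGraph W) : Prop :=
  ∃ c : SubdivCopy T S, c.supp = Set.univ ∧
    ∀ ⦃u w : W⦄, S.Adj u w → ∃ x y, ∃ h : T.Adj x y, s(u, w) ∈ (c.path h).edges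

/-- The complete binary tree of height `h`, as a simple graph: vertices are
binary strings of length at most `h`, with edges between a string and its
one-letter extensions. -/
def CBT (h : ℕ) : SimpleGraph {l : List Bool // l.length ≤ h} :=
  SimpleGraph.fromRel (fun x y => ∃ b, y.val = b :: x.val)

/-- The root of the complete binary tree. -/
def CBTroot (h : ℕ) : {l : List Bool // l.length ≤ h} := ⟨[], by simp⟩

/-- The complete ternary tree of height `h`, as a simple graph. -/
def CTT (h : ℕ) : SimpleGraph {l : List (Fin 3) // l.length ≤ h} :=
  SimpleGraph.fromRel (fun x y => ∃ b, y.val = b :: x.val)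

/-- The root of the complete ternary tree. -/
def CTTroot (h : ℕ) : {l : List (Fin 3) // l.length ≤ h} := ⟨[], by simp⟩

/-- There are `a ∈ A` and `b ∈ B` joined by a walk of `G` avoiding `C`. -/
def LinkedAvoiding {V : Type} (G : SimpleGraph V) (A B C : Set V) : Prop :=
  ∃ a ∈ A, ∃ b ∈ B, ∃ p : G.Walk a b, ∀ x ∈ p.support, x ∉ C

/-- The classes `𝒯_h`: `InT 0 G` iff `G` is connected (hence non-empty);
`InT (h+1) G` iff `G` is connected and has three pairwise disjoint vertex sets
inducing graphs in `𝒯_h`, any two of which are linked by a path avoiding the third. -/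
def InTAux : ℕ → (V : Type) → SimpleGraph V → Prop
  | 0, _, G => G.Connected
  | h + 1, V, G => G.Connected ∧ ∃ V₁ V₂ V₃ : Set V,
      Disjoint V₁ V₂ ∧ Disjoint V₁ V₃ ∧ Disjoint V₂ V₃ ∧
      InTAux h V₁ (G.induce V₁) ∧ InTAux h V₂ (G.induce V₂) ∧ InTAux h V₃ (G.induce V₃) ∧
      LinkedAvoiding G V₁ V₂ V₃ ∧ LinkedAvoiding G V₁ V₃ V₂ ∧ LinkedAvoiding G V₂ V₃ V₁

def InT (h : ℕ) {V : Type} (G : SimpleGraph V) : Prop := InTAux h V G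

/-- `a` and `b` are joined by a walk of `T` inside `A`. -/
def WalkIn {α : Type} (T : SimpleGraph α) (A : Set α) (a b : α) : Prop :=
  ∃ p : T.Walk a b, ∀ z ∈ p.support, z ∈ A

namespace WalkIn

variable {α β : Type} {T : SimpleGraph α} {A : Set α}

theorem refl {a : α} (ha : a ∈ A) : WalkIn T A a a :=
  ⟨Walk.nil, by simpa using ha⟩

theorem symm {a b : α} (h : WalkIn T A a b) : WalkIn T A b a := by
  obtain ⟨p, hp⟩ := h
  exact ⟨p.reverse, by simpa using hp⟩

theorem trans {a b c : α} (h : WalkIn T A a b) (h' : WalkIn T A b c) : WalkIn T A a c := by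
  obtain ⟨p, hp⟩ := h
  obtain ⟨q, hq⟩ := h'
  refine ⟨p.append q, fun z hz => ?_⟩
  rcases (Walk.mem_support_append_iff p q).1 hz with h | h
  · exact hp z h
  · exact hq z h

theorem adj {a b : α} (h : T.Adj a b) (ha : a ∈ A) (hb : b ∈ A) : WalkIn T A a b :=
  ⟨Walk.cons h Walk.nil, by simp [ha, hb]⟩

theorem map {T' : SimpleGraph β} {A' : Set β} (f : α → β)
    (hv : ∀ a ∈ A, f a ∈ A')
    (hf : ∀ a ∈ A, ∀ b ∈ A, T.Adj a b → WalkIn T' A' (f a) (f b)) {a b : α}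
    (h : WalkIn T A a b) : WalkIn T' A' (f a) (f b) := by
  obtain ⟨p, hp⟩ := h
  induction p with
  | nil => exact refl (hv _ (hp _ (by simp)))
  | cons e p ih =>
    refine (hf _ (hp _ (by simp)) _ (hp _ (by simp)) e).trans (ih fun z hz => hp z ?_)
    simp [hz]

theorem preconnected_iff :
    (T.induce A).Preconnected ↔ ∀ a ∈ A, ∀ b ∈ A, WalkIn T A a b := by
  constructor
  · intro h a ha b hb
    obtain ⟨p⟩ := h ⟨a, ha⟩ ⟨b, hb⟩
    refine ⟨p.map (Embedding.induce A).toHom, fun z hz => ?_⟩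
    erw [Walk.support_map, List.mem_map] at hz
    obtain ⟨w, _, rfl⟩ := hz
    exact w.2
  · rintro h ⟨a, ha⟩ ⟨b, hb⟩
    obtain ⟨p, hp⟩ := h a ha b hb
    exact ⟨p.induce A hp⟩

theorem connected_iff :
    (T.induce A).Connected ↔ A.Nonempty ∧ ∀ a ∈ A, ∀ b ∈ A, WalkIn T A a b := by
  rw [SimpleGraph.connected_iff, preconnected_iff, and_comm, Set.nonempty_coe_sort]

theorem of_connected (h : T.Connected) (a b : α) : WalkIn T Set.univ a b := by
  obtain ⟨p⟩ := h.preconnected a b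
  exact ⟨p, by simp⟩

theorem reachable {a b : α} (h : WalkIn T A a b) : T.Reachable a b := ⟨h.choose⟩

/-- In a forest, walks inside two sets can be replaced by one inside the intersection. -/
theorem inter (hT : T.IsAcyclic) {B : Set α} {a b : α} (h : WalkIn T A a b)
    (h' : WalkIn T B a b) : WalkIn T (A ∩ B) a b := by
  classical
  obtain ⟨p, hp⟩ := h
  obtain ⟨q, hq⟩ := h'
  have e : p.toPath = q.toPath := (hT.subsingleton_path _ _).elim _ _
  refine ⟨p.toPath, fun z hz => ⟨hp z (Walk.support_toPath_subset_support p hz), ?_⟩⟩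
  rw [e] at hz
  exact hq z (Walk.support_toPath_subset_support q hz)

end WalkIn

theorem isTree_of_card_le {α : Type} [Finite α] {T : SimpleGraph α} (h : T.Connected)
    (hc : T.edgeSet.ncard + 1 ≤ Nat.card α) : T.IsTree := by
  rw [isTree_iff_connected_and_card]
  refine ⟨h, le_antisymm hc ?_⟩
  exact h.card_vert_le_card_edgeSet_add_one

theorem card_of_isTree {α : Type} [Finite α] {T : SimpleGraph α} (h : T.IsTree) :
    T.edgeSet.ncard + 1 = Nat.card α :=
  (isTree_iff_connected_and_card.1 h).2

/-- Two copies of `T`, joined by an edge between the two copies of `y`. -/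
def glueTree {α : Type} (T : SimpleGraph α) (y : α) : SimpleGraph (α ⊕ α) where
  Adj
    | Sum.inl a, Sum.inl b => T.Adj a b
    | Sum.inr a, Sum.inr b => T.Adj a b
    | Sum.inl a, Sum.inr b => a = y ∧ b = y
    | Sum.inr a, Sum.inl b => a = y ∧ b = y
  symm := ⟨by
    rintro (a | a) (b | b) h
    · exact T.adj_symm h
    · exact ⟨h.2, h.1⟩
    · exact ⟨h.2, h.1⟩
    · exact T.adj_symm h⟩
  loopless := ⟨by
    rintro (a | a) h
    · exact T.loopless.irrefl a h
    · exact T.loopless.irrefl a h⟩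

theorem glueTree_isTree {α : Type} [Finite α] {T : SimpleGraph α} (hT : T.IsTree) (y : α) :
    (glueTree T y).IsTree := by
  have hl : ∀ a b, WalkIn (glueTree T y) Set.univ (Sum.inl a) (Sum.inl b) := fun a b =>
    WalkIn.map (T' := glueTree T y) (A' := Set.univ) Sum.inl (fun _ _ => trivial)
      (fun a _ b _ h => WalkIn.adj (by exact h) trivial trivial)
      (WalkIn.of_connected hT.connected a b)
  have hr : ∀ a b, WalkIn (glueTree T y) Set.univ (Sum.inr a) (Sum.inr b) := fun a b =>
    WalkIn.map (T' := glueTree T y) (A' := Set.univ) Sum.inr (fun _ _ => trivial)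
      (fun a _ b _ h => WalkIn.adj (by exact h) trivial trivial)
      (WalkIn.of_connected hT.connected a b)
  have hm : WalkIn (glueTree T y) Set.univ (Sum.inl y) (Sum.inr y) :=
    WalkIn.adj ⟨rfl, rfl⟩ trivial trivial
  apply isTree_of_card_le
  · haveI : Nonempty (α ⊕ α) := ⟨Sum.inl y⟩
    refine ⟨?_⟩
    rintro (a | a) (b | b)
    · exact (hl a b).reachable
    · exact (((hl a y).trans hm).trans (hr y b)).reachable
    · exact (((hl b y).trans hm).trans (hr y a)).symm.reachable
    · exact (hr a b).reachable
  · have hsub : (glueTree T y).edgeSet ⊆ (Sym2.map Sum.inl '' T.edgeSet) ∪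
        (Sym2.map Sum.inr '' T.edgeSet) ∪ {s(Sum.inl y, Sum.inr y)} := by
      intro e
      induction e with | h a b =>
      intro h
      rcases a with a | a <;> rcases b with b | b
      · exact Or.inl (Or.inl ⟨s(a, b), h, rfl⟩)
      · obtain ⟨rfl, rfl⟩ := h
        exact Or.inr rfl
      · obtain ⟨rfl, rfl⟩ := h
        exact Or.inr Sym2.eq_swap
      · exact Or.inl (Or.inr ⟨s(a, b), h, rfl⟩)
    have h1 := Set.ncard_le_ncard hsub (Set.toFinite _)
    have h2 := Set.ncard_union_le ((Sym2.map Sum.inl '' T.edgeSet) ∪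
        (Sym2.map Sum.inr '' T.edgeSet)) {s(Sum.inl y, Sum.inr y)}
    have h3 := Set.ncard_union_le (Sym2.map (Sum.inl : α → α ⊕ α) '' T.edgeSet)
        (Sym2.map (Sum.inr : α → α ⊕ α) '' T.edgeSet)
    have h4 := Set.ncard_image_le (f := Sym2.map (Sum.inl : α → α ⊕ α)) T.edgeSet.toFinite
    have h5 := Set.ncard_image_le (f := Sym2.map (Sum.inr : α → α ⊕ α)) T.edgeSet.toFinite
    have h6 := card_of_isTree hT
    rw [Set.ncard_singleton] at h2
    rw [Nat.card_sum]
    omega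

/-- Split a tree decomposition along a separation whose separator lies in one bag. -/
theorem exists_split {V : Type} {G : SimpleGraph V} (D : TreeDecomp G) [Finite D.ι]
    (V₁ V₂ : Set V) (hcov : ∀ v, v ∈ V₁ ∨ v ∈ V₂)
    (hedge : ∀ u v, G.Adj u v → (u ∈ V₁ ∧ v ∈ V₁) ∨ (u ∈ V₂ ∧ v ∈ V₂))
    (y : D.ι) (hy : ∀ v, v ∈ V₁ → v ∈ V₂ → v ∈ D.bag y) :
    ∃ D' : TreeDecomp G, Finite D'.ι ∧ ∀ x', ∃ x, D'.bag x' ⊆ D.bag x ∧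
      ((∀ v ∈ D'.bag x', v ∈ V₁) ∨ (∀ v ∈ D'.bag x', v ∈ V₂)) := by
  classical
  let bag' : D.ι ⊕ D.ι → Finset V
    | Sum.inl z => (D.bag z).filter (· ∈ V₁)
    | Sum.inr z => (D.bag z).filter (· ∈ V₂)
  have bl : ∀ z v, v ∈ bag' (Sum.inl z) ↔ v ∈ D.bag z ∧ v ∈ V₁ := fun z v => by simp [bag']
  have br : ∀ z v, v ∈ bag' (Sum.inr z) ↔ v ∈ D.bag z ∧ v ∈ V₂ := fun z v => by simp [bag']
  refine ⟨⟨D.ι ⊕ D.ι, glueTree D.tree y, glueTree_isTree D.isTree y, bag', ?_, ?_, ?_⟩, ?_, ?_⟩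
  · intro v
    obtain ⟨x, hx⟩ := D.covers v
    rcases hcov v with h | h
    · exact ⟨Sum.inl x, (bl _ _).2 ⟨hx, h⟩⟩
    · exact ⟨Sum.inr x, (br _ _).2 ⟨hx, h⟩⟩
  · intro u v huv
    obtain ⟨x, hx⟩ := D.coversEdge huv
    rcases hedge u v huv with h | h
    · exact ⟨Sum.inl x, (bl _ _).2 ⟨hx.1, h.1⟩, (bl _ _).2 ⟨hx.2, h.2⟩⟩
    · exact ⟨Sum.inr x, (br _ _).2 ⟨hx.1, h.1⟩, (br _ _).2 ⟨hx.2, h.2⟩⟩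
  · intro v
    obtain ⟨⟨x, hx⟩, hc⟩ := WalkIn.connected_iff.1 (D.bagConn v)
    rw [WalkIn.connected_iff]
    have hl : v ∈ V₁ → ∀ a b, v ∈ D.bag a → v ∈ D.bag b →
        WalkIn (glueTree D.tree y) {x | v ∈ bag' x} (Sum.inl a) (Sum.inl b) :=
      fun h1 a b ha hb => WalkIn.map (T' := glueTree D.tree y) (A' := {x | v ∈ bag' x})
        Sum.inl (fun a ha => (bl a v).2 ⟨ha, h1⟩)
        (fun a ha b hb h =>
          WalkIn.adj (by exact h) ((bl a v).2 ⟨ha, h1⟩) ((bl b v).2 ⟨hb, h1⟩))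
        (hc a ha b hb)
    have hr : v ∈ V₂ → ∀ a b, v ∈ D.bag a → v ∈ D.bag b →
        WalkIn (glueTree D.tree y) {x | v ∈ bag' x} (Sum.inr a) (Sum.inr b) :=
      fun h1 a b ha hb => WalkIn.map (T' := glueTree D.tree y) (A' := {x | v ∈ bag' x})
        Sum.inr (fun a ha => (br a v).2 ⟨ha, h1⟩)
        (fun a ha b hb h =>
          WalkIn.adj (by exact h) ((br a v).2 ⟨ha, h1⟩) ((br b v).2 ⟨hb, h1⟩))
        (hc a ha b hb)
    have hm : v ∈ V₁ → v ∈ V₂ →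
        WalkIn (glueTree D.tree y) {x | v ∈ bag' x} (Sum.inl y) (Sum.inr y) := fun h1 h2 =>
      WalkIn.adj ⟨rfl, rfl⟩ ((bl _ _).2 ⟨hy v h1 h2, h1⟩) ((br _ _).2 ⟨hy v h1 h2, h2⟩)
    refine ⟨?_, ?_⟩
    · rcases hcov v with h | h
      · exact ⟨Sum.inl x, (bl _ _).2 ⟨hx, h⟩⟩
      · exact ⟨Sum.inr x, (br _ _).2 ⟨hx, h⟩⟩
    · rintro (a | a) ha (b | b) hb
      · have ha := (bl _ _).1 ha
        have hb := (bl _ _).1 hb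
        exact hl ha.2 _ _ ha.1 hb.1
      · have ha := (bl _ _).1 ha
        have hb := (br _ _).1 hb
        have h := hy v ha.2 hb.2
        exact ((hl ha.2 _ _ ha.1 h).trans (hm ha.2 hb.2)).trans (hr hb.2 _ _ h hb.1)
      · have ha := (br _ _).1 ha
        have hb := (bl _ _).1 hb
        have h := hy v hb.2 ha.2
        exact (((hl hb.2 _ _ hb.1 h).trans (hm hb.2 ha.2)).trans (hr ha.2 _ _ h ha.1)).symm
      · have ha := (br _ _).1 ha
        have hb := (br _ _).1 hb
        exact hr ha.2 _ _ ha.1 hb.1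
  · exact (inferInstance : Finite (D.ι ⊕ D.ι))
  · rintro (x | x)
    · exact ⟨x, fun v hv => ((bl _ _).1 hv).1, Or.inl fun v hv => ((bl _ _).1 hv).2⟩
    · exact ⟨x, fun v hv => ((br _ _).1 hv).1, Or.inr fun v hv => ((br _ _).1 hv).2⟩

/-- Contract an edge `xy` with `B_x ⊆ B_y`. -/
theorem exists_contract {V : Type} {G : SimpleGraph V} (D : TreeDecomp G) [Finite D.ι]
    {x y : D.ι} (hxy : D.tree.Adj x y) (hsub : D.bag x ⊆ D.bag y) :
    ∃ D' : TreeDecomp G, Finite D'.ι ∧ Nat.card D'.ι < Nat.card D.ι ∧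
      ∀ x', ∃ x, D'.bag x' ⊆ D.bag x := by
  classical
  let f : D.ι → {z : D.ι // z ≠ x} := fun z => if h : z = x then ⟨y, hxy.ne'⟩ else ⟨z, h⟩
  have fx : f x = ⟨y, hxy.ne'⟩ := by simp [f]
  have fz : ∀ z : {z : D.ι // z ≠ x}, f z = z := fun z => by simp [f, z.2]
  have fbag : ∀ v z, v ∈ D.bag z → v ∈ D.bag (f z) := by
    intro v z hv
    by_cases h : z = x
    · subst h
      rw [fx]
      exact hsub hv
    · have := fz ⟨z, h⟩
      simp only at this
      rw [this]
      exact hv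
  let T' : SimpleGraph {z : D.ι // z ≠ x} :=
    { Adj := fun a b => a ≠ b ∧ ∃ c d, D.tree.Adj c d ∧ f c = a ∧ f d = b
      symm := ⟨fun a b ⟨h, c, d, h1, h2, h3⟩ => ⟨h.symm, d, c, h1.symm, h3, h2⟩⟩
      loopless := ⟨fun a h => h.1 rfl⟩ }
  have hmap : ∀ (A : Set D.ι) (A' : Set {z : D.ι // z ≠ x}), (∀ a ∈ A, f a ∈ A') →
      ∀ a b, WalkIn D.tree A a b → WalkIn T' A' (f a) (f b) := by
    intro A A' hA a b h
    refine h.map f hA fun a ha b hb hab => ?_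
    by_cases e : f a = f b
    · rw [e]
      exact WalkIn.refl (hA b hb)
    · exact WalkIn.adj ⟨e, a, b, hab, rfl, rfl⟩ (hA a ha) (hA b hb)
  have hcard : Nat.card {z : D.ι // z ≠ x} + 1 = Nat.card D.ι := by
    have := Set.ncard_add_ncard_compl ({x} : Set D.ι)
    rw [Set.ncard_singleton] at this
    have h2 : Nat.card {z : D.ι // z ≠ x} = ({x}ᶜ : Set D.ι).ncard := rfl
    omega
  refine ⟨⟨{z : D.ι // z ≠ x}, T', ?_, fun z => D.bag z, ?_, ?_, ?_⟩, ?_, ?_, ?_⟩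
  · apply isTree_of_card_le
    · haveI : Nonempty {z : D.ι // z ≠ x} := ⟨⟨y, hxy.ne'⟩⟩
      refine ⟨fun a b => ?_⟩
      have := hmap Set.univ Set.univ (by simp) a b (WalkIn.of_connected D.isTree.connected _ _)
      rw [fz, fz] at this
      exact this.reachable
    · have hs : T'.edgeSet ⊆ Sym2.map f '' (D.tree.edgeSet \ {s(x, y)}) := by
        intro e
        induction e with | h a b =>
        rintro ⟨hne, c, d, hcd, rfl, rfl⟩
        refine ⟨s(c, d), ⟨hcd, ?_⟩, rfl⟩
        intro h
        have fy : f y = f x := by rw [fx]; exact fz ⟨y, hxy.ne'⟩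
        rcases Sym2.eq_iff.1 h with ⟨rfl, rfl⟩ | ⟨rfl, rfl⟩
        · exact hne fy.symm
        · exact hne fy
      have h1 := Set.ncard_le_ncard hs (Set.toFinite _)
      have h2 := Set.ncard_image_le (f := Sym2.map f) (D.tree.edgeSet \ {s(x, y)}).toFinite
      have h3 := Set.ncard_sdiff_singleton_add_one (s := D.tree.edgeSet) (a := s(x, y)) hxy
        (Set.toFinite _)
      have h4 := card_of_isTree D.isTree
      omega
  · intro v
    obtain ⟨z, hz⟩ := D.covers v
    exact ⟨f z, fbag _ _ hz⟩
  · intro u v huv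
    obtain ⟨z, hz⟩ := D.coversEdge huv
    exact ⟨f z, fbag _ _ hz.1, fbag _ _ hz.2⟩
  · intro v
    obtain ⟨⟨z, hz⟩, hc⟩ := WalkIn.connected_iff.1 (D.bagConn v)
    rw [WalkIn.connected_iff]
    refine ⟨⟨f z, fbag _ _ hz⟩, fun a ha b hb => ?_⟩
    have := hmap {z | v ∈ D.bag z} {z | v ∈ D.bag z} (fun a ha => fbag _ _ ha) a b
      (hc a ha b hb)
    rwa [fz, fz] at this
  · exact (inferInstance : Finite {z : D.ι // z ≠ x})
  · show Nat.card {z : D.ι // z ≠ x} < _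
    omega
  · exact fun x' => ⟨x', subset_rfl⟩

/-- Every tree decomposition of a finite graph restricts to one with finitely many nodes. -/
theorem exists_finite {V : Type} [Finite V] {G : SimpleGraph V} (D : TreeDecomp G) :
    ∃ D' : TreeDecomp G, Finite D'.ι ∧ ∀ x', ∃ x, D'.bag x' ⊆ D.bag x := by
  classical
  haveI := Fintype.ofFinite V
  haveI := D.isTree.connected.nonempty
  choose c hc using D.covers
  have : ∀ p : V × V, ∃ x, G.Adj p.1 p.2 → p.1 ∈ D.bag x ∧ p.2 ∈ D.bag x := by
    intro p
    by_cases h : G.Adj p.1 p.2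
    · obtain ⟨x, hx⟩ := D.coversEdge h
      exact ⟨x, fun _ => hx⟩
    · exact ⟨Classical.arbitrary _, fun h' => absurd h' h⟩
  choose e he using this
  let t : Finset D.ι := insert (Classical.arbitrary _)
    (Finset.univ.image c ∪ Finset.univ.image e)
  obtain ⟨S, hS, hconn⟩ := extend_finset_to_connected D.isTree.connected.preconnected
    (t := t) ⟨_, Finset.mem_insert_self _ _⟩
  have hcS : ∀ v, c v ∈ S := fun v => hS (by simp [t])
  have heS : ∀ u v, e (u, v) ∈ S := fun u v => hS (by
    simp only [t, Finset.mem_insert, Finset.mem_union, Finset.mem_image]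
    exact Or.inr (Or.inr ⟨(u, v), Finset.mem_univ _, rfl⟩))
  obtain ⟨-, hSj⟩ := WalkIn.connected_iff.1 hconn
  refine ⟨⟨(S : Set D.ι), D.tree.induce (S : Set D.ι), ⟨hconn, D.isTree.isAcyclic.induce _⟩,
    fun z => D.bag z, ?_, ?_, ?_⟩, ?_, ?_⟩
  · exact fun v => ⟨⟨c v, hcS v⟩, hc v⟩
  · exact fun u v huv => ⟨⟨e (u, v), heS u v⟩, he (u, v) huv⟩
  · intro v
    obtain ⟨-, hj⟩ := WalkIn.connected_iff.1 (D.bagConn v)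
    rw [WalkIn.connected_iff]
    refine ⟨⟨⟨c v, hcS v⟩, hc v⟩, fun a ha b hb => ?_⟩
    obtain ⟨p, hp⟩ := (hSj a a.2 b b.2).inter D.isTree.isAcyclic (hj a ha b hb)
    refine ⟨p.induce (S : Set D.ι) fun z hz => (hp z hz).1, fun z hz => ?_⟩
    rw [Walk.support_induce] at hz
    have : (z : D.ι) ∈ p.support := by simpa using hz
    exact (hp z this).2
  · exact (inferInstance : Finite (S : Set D.ι))
  · exact fun x' => ⟨x', subset_rfl⟩

/-- The pairs of vertices sharing a bag. -/
def TreeDecomp.pairs {V : Type} {G : SimpleGraph V} (D : TreeDecomp G) : Set (V × V) :=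
  {p | ∃ x, p.1 ∈ D.bag x ∧ p.2 ∈ D.bag x}

theorem pairs_subset {V : Type} {G : SimpleGraph V} {D D' : TreeDecomp G}
    (h : ∀ x', ∃ x, D'.bag x' ⊆ D.bag x) : D'.pairs ⊆ D.pairs := by
  rintro p ⟨x', h1, h2⟩
  obtain ⟨x, hx⟩ := h x'
  exact ⟨x, hx h1, hx h2⟩

theorem width_le {V : Type} {G : SimpleGraph V} {D D' : TreeDecomp G}
    (h : ∀ x', ∃ x, D'.bag x' ⊆ D.bag x) {k : ℕ} (hk : ∀ x, (D.bag x).card ≤ k) :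
    ∀ x, (D'.bag x).card ≤ k := by
  intro x'
  obtain ⟨x, hx⟩ := h x'
  exact (Finset.card_le_card hx).trans (hk x)

theorem exists_good {V : Type} [Finite V] {G : SimpleGraph V} {k : ℕ} (h : TwLE G k) :
    ∃ D : TreeDecomp G, (∀ x, (D.bag x).card ≤ k + 1) ∧
      (∀ x y, D.tree.Adj x y → ¬ D.bag x ⊆ D.bag y) ∧
      (∀ (V₁ V₂ : Set V), (∀ v, v ∈ V₁ ∨ v ∈ V₂) →
        (∀ u v, G.Adj u v → (u ∈ V₁ ∧ v ∈ V₁) ∨ (u ∈ V₂ ∧ v ∈ V₂)) →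
        ∀ y, (∀ v, v ∈ V₁ → v ∈ V₂ → v ∈ D.bag y) →
        ∀ x, ∀ u ∈ D.bag x, ∀ v ∈ D.bag x, u ∈ V₁ → u ∉ V₂ → v ∈ V₂ → v ∉ V₁ → False) := by
  classical
  obtain ⟨D₀, hD₀⟩ := h
  obtain ⟨D₁, hf, hsub⟩ := exists_finite D₀
  let P : ℕ → Prop := fun m => ∃ D : TreeDecomp G, Finite D.ι ∧
    (∀ x, (D.bag x).card ≤ k + 1) ∧ D.pairs.ncard = m
  have hP : ∃ m, P m := ⟨_, D₁, hf, width_le hsub hD₀, rfl⟩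
  let Q : ℕ → Prop := fun n => ∃ D : TreeDecomp G, Finite D.ι ∧
    (∀ x, (D.bag x).card ≤ k + 1) ∧ D.pairs.ncard = Nat.find hP ∧ Nat.card D.ι = n
  have hQ : ∃ n, Q n := by
    obtain ⟨D, h1, h2, h3⟩ := Nat.find_spec hP
    exact ⟨_, D, h1, h2, h3, rfl⟩
  obtain ⟨D, h1, h2, h3, h4⟩ := Nat.find_spec hQ
  refine ⟨D, h2, ?_, ?_⟩
  · intro x y hxy hb
    obtain ⟨D', f', c', s'⟩ := exists_contract D hxy hb
    have w' := width_le s' h2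
    have l1 : D'.pairs.ncard ≤ D.pairs.ncard :=
      Set.ncard_le_ncard (pairs_subset s') (Set.toFinite _)
    have l2 : Nat.find hP ≤ D'.pairs.ncard := Nat.find_min' hP ⟨D', f', w', rfl⟩
    have l3 : Nat.find hQ ≤ Nat.card D'.ι :=
      Nat.find_min' hQ ⟨D', f', w', by omega, rfl⟩
    omega
  · intro V₁ V₂ hcov hedge y hy x u hu v hv hu1 hu2 hv2 hv1
    obtain ⟨D', f', s'⟩ := exists_split D V₁ V₂ hcov hedge y hy
    have s'' : ∀ x', ∃ x, D'.bag x' ⊆ D.bag x := fun x' => by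
      obtain ⟨x, h, -⟩ := s' x'
      exact ⟨x, h⟩
    have w' := width_le s'' h2
    have l2 : Nat.find hP ≤ D'.pairs.ncard := Nat.find_min' hP ⟨D', f', w', rfl⟩
    have l1 : D'.pairs.ncard < D.pairs.ncard := by
      apply Set.ncard_lt_ncard _ (Set.toFinite _)
      refine ⟨pairs_subset s'', fun hh => ?_⟩
      obtain ⟨x', hx1, hx2⟩ := hh (show (u, v) ∈ D.pairs from ⟨x, hu, hv⟩)
      obtain ⟨-, -, h | h⟩ := s' x'
      · exact hv1 (h _ hx2)
      · exact hu2 (h _ hx1)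
    omega

theorem TwLE.exists {V : Type} [Fintype V] (G : SimpleGraph V) : ∃ k, TwLE G k := by
  refine ⟨Fintype.card V, ⟨Unit, ⊥, IsTree.of_subsingleton, fun _ => Finset.univ, ?_, ?_, ?_⟩, ?_⟩
  · simp
  · simp
  · intro v
    rw [WalkIn.connected_iff]
    exact ⟨⟨(), by simp⟩, fun a _ b _ => WalkIn.refl (by simp)⟩
  · intro x
    simp

/-- A vertex with bags on both sides of the edge `xy` is in both end bags. -/
theorem mem_ends {V : Type} {G : SimpleGraph V} (D : TreeDecomp G) {x y : D.ι}
    (hxy : D.tree.Adj x y) {q : V} {z₁ z₂ : D.ι}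
    (h₁ : ∀ w : D.tree.Walk z₁ y, x ∈ w.support) (hq₁ : q ∈ D.bag z₁)
    (h₂ : ¬ ∀ w : D.tree.Walk z₂ y, x ∈ w.support) (hq₂ : q ∈ D.bag z₂) :
    q ∈ D.bag x ∧ q ∈ D.bag y := by
  obtain ⟨-, hj⟩ := WalkIn.connected_iff.1 (D.bagConn q)
  push Not at h₂
  obtain ⟨w, hw⟩ := h₂
  have hx : q ∈ D.bag x := by
    obtain ⟨p, hp⟩ := hj z₁ hq₁ z₂ hq₂
    rcases (Walk.mem_support_append_iff p w).1 (h₁ (p.append w)) with h | h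
    · exact hp x h
    · exact absurd h hw
  refine ⟨hx, ?_⟩
  by_contra hy
  obtain ⟨p, hp⟩ := hj x hx z₂ hq₂
  have hb := isAcyclic_iff_forall_adj_isBridge.1 D.isTree.isAcyclic hxy
  have := isBridge_iff_forall_walk_mem_edges.1 hb (p.append w)
  rw [Walk.edges_append, List.mem_append] at this
  rcases this with h | h
  · exact hy (hp y (p.snd_mem_support_of_mem_edges h))
  · exact hw (w.fst_mem_support_of_mem_edges h)

theorem stmt7 {V : Type} [Fintype V] (G : SimpleGraph V) (hG : G.Connected) :
    ∃ D : TreeDecomp G,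
      (∀ k, TwLE G k → ∀ x, (D.bag x).card ≤ k + 1) ∧
      ∀ ⦃x y : D.ι⦄, D.tree.Adj x y →
        (G.induce {v | ∃ z, (∀ w : D.tree.Walk z y, x ∈ w.support) ∧ v ∈ D.bag z}).Connected := by
  classical
  obtain ⟨D, hw, hred, hsep⟩ := exists_good (Nat.find_spec (TwLE.exists G))
  refine ⟨D, fun k hk x => (hw x).trans ?_, fun x y hxy => ?_⟩
  · have := Nat.find_min' (TwLE.exists G) hk
    omega
  set W : Set V := {v | ∃ z, (∀ w : D.tree.Walk z y, x ∈ w.support) ∧ v ∈ D.bag z} with hW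
  have hxW : ∀ v ∈ D.bag x, v ∈ W := fun v hv => ⟨x, fun w => w.start_mem_support, hv⟩
  obtain ⟨s, hsx, hsy⟩ := Finset.not_subset.1 (hred x y hxy)
  -- an edge leaving `W` starts in both end bags
  have hout : ∀ p q, G.Adj p q → p ∉ W → q ∈ W → q ∈ D.bag x ∧ q ∈ D.bag y := by
    rintro p q hpq hp ⟨z₁, h₁, hq₁⟩
    obtain ⟨z₂, hp₂, hq₂⟩ := D.coversEdge hpq
    exact mem_ends D hxy h₁ hq₁ (fun h => hp ⟨z₂, h, hp₂⟩) hq₂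
  have key : ∀ a ∈ W, WalkIn G W s a := by
    by_contra hcon
    push Not at hcon
    obtain ⟨a₀, ha₀, hna₀⟩ := hcon
    let B : Set V := {v | WalkIn G W s v}
    have hBW : ∀ v ∈ B, v ∈ W := fun v ⟨p, hp⟩ => hp v p.end_mem_support
    have hBs : s ∈ B := WalkIn.refl (hxW s hsx)
    have hBadj : ∀ p q, G.Adj p q → p ∈ W → q ∈ B → p ∈ B := fun p q hpq hp hq =>
      WalkIn.trans hq (WalkIn.adj hpq.symm (hBW q hq) hp)
    -- a vertex of `W \ B` in the bag of `x`
    obtain ⟨a, haW, haB, hax⟩ : ∃ a, a ∈ W ∧ a ∉ B ∧ a ∈ D.bag x := by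
      by_contra hno
      push Not at hno
      have : ∀ a b, WalkIn G Set.univ a b → a ∈ W ∧ a ∉ B → b ∈ W ∧ b ∉ B := by
        rintro a b ⟨p, -⟩ ha
        induction p with
        | nil => exact ha
        | @cons a c b e p ih =>
          apply ih
          have hcW : c ∈ W := by
            by_contra hc
            exact hno _ ha.1 ha.2 (hout c a e.symm hc ha.1).1
          exact ⟨hcW, fun hcB => ha.2 (hBadj _ _ e ha.1 hcB)⟩
      exact (this a₀ s (WalkIn.of_connected hG _ _) ⟨ha₀, hna₀⟩).2 hBs
    refine hsep {v | v ∉ B ∨ v ∈ D.bag y} B ?_ ?_ y ?_ x a hax s hsx (Or.inl haB) haB hBs ?_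
    · intro v
      by_cases h : v ∈ B
      · exact Or.inr h
      · exact Or.inl (Or.inl h)
    · have hcross : ∀ p q, G.Adj p q → p ∉ B → q ∈ B → q ∈ D.bag y := fun p q hpq hp hq =>
        (hout p q hpq (fun h => hp (hBadj p q hpq h hq)) (hBW q hq)).2
      intro u v huv
      by_cases hu : u ∈ B <;> by_cases hv : v ∈ B
      · exact Or.inr ⟨hu, hv⟩
      · exact Or.inl ⟨Or.inr (hcross v u huv.symm hv hu), Or.inl hv⟩
      · exact Or.inl ⟨Or.inl hu, Or.inr (hcross u v huv hu hv)⟩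
      · exact Or.inl ⟨Or.inl hu, Or.inl hv⟩
    · rintro v (h | h) h'
      · exact absurd h' h
      · exact h
    · rintro (h | h)
      · exact h hBs
      · exact hsy h
  rw [WalkIn.connected_iff]
  exact ⟨⟨s, hxW s hsx⟩, fun a ha b hb => (key a ha).symm.trans (key b hb)⟩
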